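/- For every n ≥ 1 the dual canonical basis elements satisfy B[n−1,0,0,n] = q^{n−1} B[n−1,0,0,n−1] u₀ − q^{2n−1} B[n−2,1,0,n−1] u₁ = q^{3n−3} u₀ B[n−1,0,0,n−1] − q^{2n−3} u₁ B[n−2,1,0,n−1]. -/

import Mathlib

noncomputable section

abbrev F : Type := RatFunc ℚ

/-- The deformation parameter `q`. -/
def qq : F := RatFunc.X

/-- The quantum integer `[3] = q² + 1 + q⁻²`. -/
def box3 : F := qq ^ 2 + 1 + (qq⁻¹) ^ 2

/-- The generators `E₁, E₂` of the free algebra. -/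
def gen (i : Fin 2) : FreeAlgebra F (Fin 2) := FreeAlgebra.ι F i

/-- The quantized Serre relations. -/
inductive SerreRel : FreeAlgebra F (Fin 2) → FreeAlgebra F (Fin 2) → Prop
  | rel1 : SerreRel
      (gen 0 ^ 3 * gen 1 - box3 • (gen 0 ^ 2 * gen 1 * gen 0)
        + box3 • (gen 0 * gen 1 * gen 0 ^ 2) - gen 1 * gen 0 ^ 3) 0
  | rel2 : SerreRel
      (gen 1 ^ 3 * gen 0 - box3 • (gen 1 ^ 2 * gen 0 * gen 1)
        + box3 • (gen 1 * gen 0 * gen 1 ^ 2) - gen 0 * gen 1 ^ 3) 0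

/-- `U = U_q(𝔫)`, the free algebra on `E₁, E₂` modulo the quantized Serre relations. -/
abbrev U : Type := RingQuot SerreRel

def E1 : U := RingQuot.mkAlgHom F SerreRel (gen 0)
def E2 : U := RingQuot.mkAlgHom F SerreRel (gen 1)

/-- `A = (1/(q+q⁻¹))(E₂E₁ − q⁻²E₁E₂)`. -/
def Aelt : U := (qq + qq⁻¹)⁻¹ • (E2 * E1 - (qq⁻¹) ^ 2 • (E1 * E2))

def v0 : U := E1
def v1 : U := Aelt * v0 - v0 * Aelt
def v2 : U := Aelt * v1 - v1 * Aelt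
def v3 : U := Aelt * v2 - v2 * Aelt

/-- `uᵢ = (1 − q⁻²)⁻²ⁱ vᵢ`. -/
def u0 : U := v0
def u1 : U := ((1 - (qq⁻¹) ^ 2)⁻¹) ^ 2 • v1
def u2 : U := ((1 - (qq⁻¹) ^ 2)⁻¹) ^ 4 • v2
def u3 : U := ((1 - (qq⁻¹) ^ 2)⁻¹) ^ 6 • v3

/-- `p₁ = u₃u₁ − q²u₂²`. -/
def p1 : U := u3 * u1 - qq ^ 2 • u2 ^ 2
/-- `p₀ = u₂u₀ − q²u₁²`. -/
def p0 : U := u2 * u0 - qq ^ 2 • u1 ^ 2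

/-- `S`, the subalgebra of `U` generated by `u₀, u₁, u₂, u₃`. -/
abbrev Sgen : Subalgebra F U := Algebra.adjoin F ({u0, u1, u2, u3} : Set U)

def us0 : Sgen := ⟨u0, Algebra.subset_adjoin (by simp)⟩
def us1 : Sgen := ⟨u1, Algebra.subset_adjoin (by simp)⟩
def us2 : Sgen := ⟨u2, Algebra.subset_adjoin (by simp)⟩
def us3 : Sgen := ⟨u3, Algebra.subset_adjoin (by simp)⟩

/-- `p₁ = u₃u₁ − q²u₂²` as an element of `S`. -/
def ps1 : Sgen := us3 * us1 - qq ^ 2 • us2 ^ 2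
/-- `p₀ = u₂u₀ − q²u₁²` as an element of `S`. -/
def ps0 : Sgen := us2 * us0 - qq ^ 2 • us1 ^ 2

/-- Index quadruples `a = (a₃, a₂, a₁, a₀)`. -/
abbrev Idx : Type := ℕ × ℕ × ℕ × ℕ

/-- The PBW monomial `u₃^{a₃}u₂^{a₂}u₁^{a₁}u₀^{a₀}`. -/
def mon (a : Idx) : Sgen := us3 ^ a.1 * us2 ^ a.2.1 * us1 ^ a.2.2.1 * us0 ^ a.2.2.2

/-- `b(a) = C(a₃,2)+C(a₂,2)+C(a₁,2)+C(a₀,2)`. -/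
def bexp (a : Idx) : ℕ :=
  Nat.choose a.1 2 + Nat.choose a.2.1 2 + Nat.choose a.2.2.1 2 + Nat.choose a.2.2.2 2

/-- The dual PBW basis element `E[a] = q^{b(a)} u₃^{a₃}u₂^{a₂}u₁^{a₁}u₀^{a₀}`. -/
def Ee (a : Idx) : Sgen := qq ^ bexp a • mon a

/-- `N(a) = (a₃+a₂+a₁+a₀)² − 7a₃ − 5a₂ − 3a₁ − a₀`. -/
def Nnum (a : Idx) : ℤ :=
  ((a.1 : ℤ) + a.2.1 + a.2.2.1 + a.2.2.2) ^ 2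
    - 7 * a.1 - 5 * a.2.1 - 3 * a.2.2.1 - a.2.2.2

/-- `a ⊴ b` iff `b − a ∈ ℕ·(−1,2,−1,0) + ℕ·(0,−1,2,−1)`. -/
def tri (a b : Idx) : Prop :=
  ∃ s r : ℕ,
    (b.1 : ℤ) = a.1 - s ∧
    (b.2.1 : ℤ) = a.2.1 + 2 * s - r ∧
    (b.2.2.1 : ℤ) = a.2.2.1 - s + 2 * r ∧
    (b.2.2.2 : ℤ) = a.2.2.2 - r

/-- `S(a) = {b ∈ ℕ⁴ : a ⊴ b and a ≠ b}`. -/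
def Sset (a : Idx) : Set Idx := {b | tri a b ∧ a ≠ b}

/-- Condition (i): `B[a] − E[a] ∈ Σ_{b ∈ S(a)} qℤ[q]·E[b]`. -/
def cond1 (B : Idx → Sgen) (a : Idx) : Prop :=
  ∃ φ : Idx →₀ Polynomial ℤ,
    (↑φ.support : Set Idx) ⊆ Sset a ∧
    B a - Ee a =
      φ.sum fun b p => (qq * Polynomial.eval₂ (Int.castRingHom F) qq p) • Ee b

/-- Hypotheses on the bar involution of coefficients `bar : q ↦ q⁻¹` and on the
anti-automorphism `σ` of `S`: `σ` is an additive, anti-multiplicative bijection with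
`σ(c(q)·x) = c(q⁻¹)·σ(x)` and `σ(uᵢ) = q^{2i}uᵢ`. -/
def SigmaHyp (bar : F →+* F) (σ : Sgen → Sgen) : Prop :=
  bar qq = qq⁻¹ ∧
  Function.Bijective σ ∧
  (∀ x y : Sgen, σ (x + y) = σ x + σ y) ∧
  (∀ x y : Sgen, σ (x * y) = σ y * σ x) ∧
  (∀ (c : F) (x : Sgen), σ (c • x) = bar c • σ x) ∧
  σ us0 = us0 ∧ σ us1 = qq ^ 2 • us1 ∧ σ us2 = qq ^ 4 • us2 ∧ σ us3 = qq ^ 6 • us3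

/-- The defining properties of the dual canonical basis `B`: for every `a ∈ ℕ⁴`,
`B[a] − E[a] ∈ Σ_{b ∈ S(a)} qℤ[q]·E[b]` and `σ(B[a]) = q^{−N(a)}B[a]`. -/
def DCB (bar : F →+* F) (σ : Sgen → Sgen) (B : Idx → Sgen) : Prop :=
  ∀ a : Idx, cond1 B a ∧ σ (B a) = qq ^ (-Nnum a) • B a

/-- Extension of `B` to integer quadruples by the convention that `B[a] = 0` whenever
some coordinate of `a` is negative. -/
def Bz (B : Idx → Sgen) (a : ℤ × ℤ × ℤ × ℤ) : Sgen :=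
  if 0 ≤ a.1 ∧ 0 ≤ a.2.1 ∧ 0 ≤ a.2.2.1 ∧ 0 ≤ a.2.2.2 then
    B (a.1.toNat, a.2.1.toNat, a.2.2.1.toNat, a.2.2.2.toNat)
  else 0

/-!
`B[a]` is the only element of the form `E[a] + ∑ qℤ[q] E[b]`, with `b` ranging over `S(a)`, on which
`σ` acts by `q^{-N(a)}`: in the difference of two such elements, a coefficient of maximal height
is a polynomial in `qℤ[q]` invariant under `q ↦ q⁻¹`, hence zero.

The four generators satisfy quadratic straightening relations, so the quantum minors `p₀`, `p₁` and
`z = u₃u₀ - q²u₂u₁` commute with each other up to powers of `q`. The sequence given by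
`ζ₀ = 1`, `ζ₁ = z`, `ζ_{n+2} = z ζ_{n+1} - q² p₀p₁ ζ_n` and its companion
`ξ_{n+1} = ζ_{n+1} u₀ - q² ζ_n p₀ u₁ = q^{2n+2} u₀ ζ_{n+1} - q^{2n} u₁ p₀ ζ_n` are eigenvectors of
`σ`; the two expressions of `ξ_{n+1}` are exchanged by `σ`. Multiplication by a generator or a
minor on the appropriate side preserves triangularity, so that up to powers of `q` the elements
`ζ_n`, `ξ_n` and `ζ_n p₀` are `B[n,0,0,n]`, `B[n,0,0,n+1]` and `B[n,1,0,n+1]`. The two expressions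
of `ξ_{n+1}` then become the two identities of the theorem.
-/

/-! ### Triangular semilinear maps -/

section Triangular

variable {ι K M : Type*} [Field K] [AddCommGroup M] [Module K M]

/-- The span of those members of the family `E` whose height `μ` is below `k`. -/
def lowerSpan (K : Type*) {ι M : Type*} [Field K] [AddCommGroup M] [Module K M]
    (E : ι → M) (μ : ι → ℕ) (k : ℕ) : Submodule K M :=
  Submodule.span K (E '' {i | μ i < k})

variable {E B : ι → M} {μ : ι → ℕ} {bar : K →+* K} {σ : M →ₛₗ[bar] M} {c : ι → K}

theorem mem_lowerSpan {i : ι} {k : ℕ} (hi : μ i < k) : E i ∈ lowerSpan K E μ k :=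
  Submodule.subset_span (Set.mem_image_of_mem E hi)

theorem lowerSpan_mono {j k : ℕ} (hjk : j ≤ k) : lowerSpan K E μ j ≤ lowerSpan K E μ k :=
  Submodule.span_mono (Set.image_mono fun _ hi => lt_of_lt_of_le hi hjk)

theorem map_sub_smul_mem_lowerSpan (hB : ∀ i, B i - E i ∈ lowerSpan K E μ (μ i))
    (hσ : ∀ i, σ (B i) = c i • B i) (i : ι) :
    σ (E i) - c i • E i ∈ lowerSpan K E μ (μ i) := by
  induction hk : μ i using Nat.strong_induction_on generalizing i with
  | _ k ih =>
    subst hk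
    have hE : ∀ j, μ j < μ i → σ (E j) ∈ lowerSpan K E μ (μ i) := fun j hj => by
      rw [← sub_add_cancel (σ (E j)) (c j • E j)]
      exact add_mem (lowerSpan_mono hj.le (ih _ hj j rfl))
        (Submodule.smul_mem _ _ (mem_lowerSpan hj))
    have hσle : lowerSpan K E μ (μ i) ≤ (lowerSpan K E μ (μ i)).comap σ := by
      refine Submodule.span_le.2 ?_
      rintro _ ⟨j, hj, rfl⟩
      exact hE j hj
    have heq : σ (E i) - c i • E i = c i • (B i - E i) - σ (B i - E i) := by
      rw [map_sub, hσ, smul_sub]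
      abel
    rw [heq]
    exact sub_mem (Submodule.smul_mem _ _ (hB i)) (hσle (hB i))

theorem apply_eq_zero_of_linearCombination_mem_lowerSpan (hE : LinearIndependent K E)
    {g : ι →₀ K} {i : ι} (hg : Finsupp.linearCombination K E g ∈ lowerSpan K E μ (μ i)) :
    g i = 0 := by
  obtain ⟨g', hg', heq⟩ := (Finsupp.mem_span_image_iff_linearCombination K).1 hg
  rw [← hE heq]
  exact Finsupp.notMem_support_iff.1 fun hi => lt_irrefl (μ i) (hg' hi)

theorem linearCombination_mapRange_sub_mem_lowerSpan
    (hσE : ∀ i, σ (E i) - c i • E i ∈ lowerSpan K E μ (μ i)) {f : ι →₀ K} {k : ℕ}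
    (hk : ∀ i ∈ f.support, μ i ≤ k) {c₀ : K} (hc₀ : c₀ ≠ 0) (hc : ∀ i ∈ f.support, c i = c₀)
    (hf : σ (Finsupp.linearCombination K E f) = c₀ • Finsupp.linearCombination K E f) :
    Finsupp.linearCombination K E (f.mapRange bar (map_zero bar) - f) ∈ lowerSpan K E μ k := by
  have hσf : σ (Finsupp.linearCombination K E f) = ∑ i ∈ f.support, bar (f i) • σ (E i) := by
    simp only [Finsupp.linearCombination_apply, Finsupp.sum, map_sum, map_smulₛₗ]
  have hbarf : Finsupp.linearCombination K E (f.mapRange bar (map_zero bar))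
      = ∑ i ∈ f.support, bar (f i) • E i := by
    rw [Finsupp.linearCombination_apply, Finsupp.sum_mapRange_index (by simp), Finsupp.sum]
  have hsum : ∑ i ∈ f.support, bar (f i) • (σ (E i) - c i • E i)
      = -(c₀ • Finsupp.linearCombination K E (f.mapRange bar (map_zero bar) - f)) := by
    rw [map_sub, smul_sub, ← hf, hσf, hbarf, Finset.smul_sum, neg_sub, ← Finset.sum_sub_distrib]
    refine Finset.sum_congr rfl fun i hi => ?_
    rw [smul_sub, hc i hi, smul_comm]
  have hmem : -(c₀ • Finsupp.linearCombination K E (f.mapRange bar (map_zero bar) - f))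
      ∈ lowerSpan K E μ k :=
    hsum ▸ sum_mem fun i hi => Submodule.smul_mem _ _ (lowerSpan_mono (hk i hi) (hσE i))
  exact (Submodule.smul_mem_iff _ hc₀).1 (neg_mem_iff.1 hmem)

-- A coefficient of maximal height in an eigenvector is invariant under `bar`.
theorem eq_zero_of_map_linearCombination_eq_smul (hE : LinearIndependent K E)
    (hσE : ∀ i, σ (E i) - c i • E i ∈ lowerSpan K E μ (μ i)) {f : ι →₀ K} {c₀ : K} (hc₀ : c₀ ≠ 0)
    (hc : ∀ i ∈ f.support, c i = c₀) (hbar : ∀ i, bar (f i) = f i → f i = 0)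
    (hf : σ (Finsupp.linearCombination K E f) = c₀ • Finsupp.linearCombination K E f) :
    f = 0 := by
  by_contra hne
  obtain ⟨m, hm, hmax⟩ := f.support.exists_max_image μ (Finsupp.support_nonempty_iff.2 hne)
  have hinv := apply_eq_zero_of_linearCombination_mem_lowerSpan hE
    (linearCombination_mapRange_sub_mem_lowerSpan hσE hmax hc₀ hc hf)
  rw [Finsupp.sub_apply, Finsupp.mapRange_apply, sub_eq_zero] at hinv
  exact Finsupp.mem_support_iff.1 hm (hbar m hinv)

end Triangular

/-! ### Transcendental parameters -/

section TranscendentalParameter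

open Polynomial

variable {K : Type*} [Field K] {q : K}

theorem aeval_eq_pow_mul_aeval_inv_reverse {x : K} (hx : x ≠ 0) (P : ℤ[X]) :
    aeval x P.reverse = x ^ P.natDegree * aeval x⁻¹ P := by
  let _ : Invertible x⁻¹ := invertibleOfNonzero (inv_ne_zero hx)
  have h := eval₂_reverse_mul_pow (algebraMap ℤ K) x⁻¹ P
  rw [invOf_eq_inv, inv_inv, inv_pow] at h
  rw [aeval_def, aeval_def, ← h, mul_comm, mul_assoc,
    inv_mul_cancel₀ (pow_ne_zero _ hx), mul_one]

-- If `q⁻¹P(q⁻¹) = qP(q)` then the reverse of `P` is `X ^ (deg P + 2) * P`, of too large a degree.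
theorem eq_zero_of_map_mul_aeval_eq (hq : Transcendental ℤ q) {bar : K →+* K}
    (hbar : bar q = q⁻¹) {P : ℤ[X]} (h : bar (q * aeval q P) = q * aeval q P) : P = 0 := by
  have hq₀ : q ≠ 0 := fun h0 => hq (h0 ▸ isAlgebraic_zero)
  have hbarP : bar (aeval q P) = aeval q⁻¹ P := by
    rw [← hbar]
    exact (aeval_algHom_apply bar.toIntAlgHom q P).symm
  rw [map_mul, hbar, hbarP] at h
  have heval : aeval q P.reverse = aeval q (X ^ (P.natDegree + 2) * P) := by
    rw [aeval_eq_pow_mul_aeval_inv_reverse hq₀, map_mul, map_pow, aeval_X]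
    rw [eq_comm, mul_comm q⁻¹, eq_mul_inv_iff_mul_eq₀ hq₀] at h
    rw [← h]
    ring
  have hdeg := congrArg natDegree (transcendental_iff_injective.1 hq heval)
  by_contra hP
  rw [natDegree_X_pow_mul _ hP] at hdeg
  have := reverse_natDegree_le P
  omega

theorem not_isOfFinOrder_of_transcendental (hq : Transcendental ℤ q) : ¬ IsOfFinOrder q := by
  rw [isOfFinOrder_iff_pow_eq_one]
  rintro ⟨n, hn, h⟩
  refine hq ⟨X ^ n - 1, X_pow_sub_C_ne_zero hn 1, ?_⟩
  rw [map_sub, map_pow, aeval_X, h, map_one, sub_self]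

end TranscendentalParameter

-- `RatFunc ℚ` carries its own `ℤ`-algebra structure, not definitionally the canonical one.
theorem transcendental_qq : @Transcendental ℤ F _ _ (Ring.toIntAlgebra F) qq := by
  rw [qq, ← RatFunc.algebraMap_X, Subsingleton.elim (Ring.toIntAlgebra F) inferInstance,
    transcendental_algebraMap_iff (RatFunc.algebraMap_injective ℚ)]
  exact (Polynomial.transcendental_X ℚ).restrictScalars (RingHom.injective_int _)

/-! ### Straightening relations -/

section Serre

attribute [local instance] LieRing.ofAssociativeRing

variable {K R : Type*} [Field K] [Ring R] [Algebra K R] {q : K} {x y : R}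

/-- The `q`-commutator `ab − q⁻²ba`. -/
def qCommutator (q : K) (a b : R) : R := a * b - (q⁻¹) ^ 2 • (b * a)

/-- The quantized Serre polynomial, cubic in `x` and linear in `y`. -/
def quantumSerre (q : K) (x y : R) : R :=
  x ^ 3 * y - (q ^ 2 + 1 + (q⁻¹) ^ 2) • (x ^ 2 * y * x)
    + (q ^ 2 + 1 + (q⁻¹) ^ 2) • (x * y * x ^ 2) - y * x ^ 3

theorem lie_qCommutator_mul_self (hq : q ≠ 0) (hxy : quantumSerre q x y = 0) :
    ⁅qCommutator q y x, x⁆ * x = q ^ 2 • (x * ⁅qCommutator q y x, x⁆) := by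
  linear_combination (norm := skip) -hxy
  simp only [quantumSerre, qCommutator, Ring.lie_def, pow_succ, pow_zero, one_mul, mul_sub, sub_mul,
    smul_mul_assoc, mul_smul_comm, mul_assoc]
  match_scalars <;> field_simp <;> ring

theorem lie_qCommutator_left {v : R} (hq : q ≠ 0) (hv : v * x = q ^ 2 • (x * v)) :
    ⁅qCommutator q y v, x⁆
      = q ^ 2 • (qCommutator q y x * v) - (q⁻¹) ^ 2 • (v * qCommutator q y x) := by
  linear_combination (norm := skip) y * hv - (q⁻¹) ^ 4 • (hv * y)
  simp only [qCommutator, Ring.lie_def, mul_sub, sub_mul, smul_mul_assoc, mul_smul_comm, mul_assoc]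
  match_scalars <;> field_simp <;> ring

theorem qCommutator_lie_qCommutator :
    qCommutator q y ⁅qCommutator q y x, x⁆ = qCommutator q ⁅y, qCommutator q y x⁆ x := by
  simp only [qCommutator, Ring.lie_def, mul_sub, sub_mul, smul_mul_assoc, mul_smul_comm, mul_assoc]
  match_scalars <;> ring

-- The mirror image of `lie_qCommutator_mul_self` and `lie_qCommutator_left`: reversing products and
-- exchanging `x` and `y` fixes both `qCommutator q y x` and the element in question.
theorem lie_qCommutator_right (hq : q ≠ 0) (hyx : quantumSerre q y x = 0) :
    ⁅y, qCommutator q y ⁅qCommutator q y x, x⁆⁆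
      = q ^ 2 • (⁅y, qCommutator q y x⁆ * qCommutator q y x)
        - (q⁻¹) ^ 2 • (qCommutator q y x * ⁅y, qCommutator q y x⁆) := by
  have hop : quantumSerre q (MulOpposite.op y) (MulOpposite.op x) = 0 := by
    have h := congrArg (fun z => -MulOpposite.op z) hyx
    simp only [quantumSerre, MulOpposite.op_add, MulOpposite.op_sub, MulOpposite.op_smul,
      MulOpposite.op_mul, MulOpposite.op_pow, MulOpposite.op_zero, neg_zero] at h ⊢
    rw [← h]
    simp only [mul_assoc]
    abel
  have h := congrArg MulOpposite.unop (lie_qCommutator_left (y := MulOpposite.op x) hq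
    (lie_qCommutator_mul_self hq hop))
  rw [qCommutator_lie_qCommutator]
  simpa only [qCommutator, Ring.lie_def, MulOpposite.unop_sub, MulOpposite.unop_smul,
    MulOpposite.unop_mul, MulOpposite.unop_op] using h

theorem commute_qCommutator_lie_qCommutator (hq : q ≠ 0) (h3 : q ^ 2 + 1 + (q⁻¹) ^ 2 ≠ 0)
    (hxy : quantumSerre q x y = 0) (hyx : quantumSerre q y x = 0) :
    Commute (qCommutator q y x) (qCommutator q y ⁅qCommutator q y x, x⁆) := by
  have hx := lie_qCommutator_left (y := y) hq (lie_qCommutator_mul_self hq hxy)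
  have hy := lie_qCommutator_right hq hyx
  have hDr := qCommutator_lie_qCommutator (q := q) (x := x) (y := y)
  have hC : y * x = qCommutator q y x + (q⁻¹) ^ 2 • (x * y) := (sub_add_cancel _ _).symm
  generalize qCommutator q y x = C at *
  generalize hDl : qCommutator q y ⁅C, x⁆ = D at *
  have hsmul : (q ^ 2 + 1 + (q⁻¹) ^ 2) • (C * D - D * C) = 0 := by
    simp only [qCommutator, Ring.lie_def] at *
    linear_combination (norm := skip) D * hC - hC * D - y * hx + hy * x
      - (q⁻¹) ^ 2 • (x * hy) + (q⁻¹) ^ 2 • (hx * y) - q ^ 2 • (C * hDl) + (q⁻¹) ^ 2 • (C * hDr)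
      - q ^ 2 • (hDr * C) + (q⁻¹) ^ 2 • (hDl * C)
    simp only [mul_add, add_mul, mul_sub, sub_mul, smul_mul_assoc, mul_smul_comm, mul_assoc]
    match_scalars <;> field_simp <;> ring
  exact sub_eq_zero.1 ((smul_eq_zero.1 hsmul).resolve_left h3)

theorem lie_mul_eq (T a b : R) : ⁅T, a * b⁆ = ⁅T, a⁆ * b + a * ⁅T, b⁆ := by
  simp only [Ring.lie_def]
  noncomm_ring

-- `⁅T, ·⁆` and `k • ⁅A, ⁅A, ·⁆⁆` agree on `x₀` and `x₁`, but only the former is a derivation: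
-- applied to `h` they differ by the cross terms, which are multiples of `x₂ * x₁` and `x₁ * x₂`.
theorem straightening_of_lie {A T x₀ x₁ x₂ x₃ : R} {k : K} (h2 : (2 : K) ≠ 0) (hk : k ≠ 0)
    (h₀ : ⁅A, x₀⁆ = x₁) (h₁ : ⁅A, x₁⁆ = x₂) (h₂ : ⁅A, x₂⁆ = x₃)
    (hT₀ : ⁅T, x₀⁆ = k • x₂) (hT₁ : ⁅T, x₁⁆ = k • x₃) (h : x₁ * x₀ = q ^ 2 • (x₀ * x₁)) :
    x₂ * x₁ = q ^ 2 • (x₁ * x₂) ∧ x₂ * x₀ = q ^ 2 • (x₀ * x₂) + (q ^ 2 - 1) • (x₁ * x₁) ∧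
      x₃ * x₀ = q ^ 2 • (x₀ * x₃) + (q ^ 4 - 1) • (x₁ * x₂) := by
  have hA := congrArg (⁅A, ·⁆) h
  simp only [lie_mul_eq, LieAlgebra.lie_smul, h₀, h₁] at hA
  have hAA := congrArg (⁅A, ·⁆) hA
  simp only [lie_add, lie_mul_eq, LieAlgebra.lie_smul, h₀, h₁, h₂] at hAA
  have hT := congrArg (⁅T, ·⁆) h
  simp only [lie_mul_eq, LieAlgebra.lie_smul, hT₀, hT₁, smul_mul_assoc, mul_smul_comm] at hT
  have h21 : x₂ * x₁ = q ^ 2 • (x₁ * x₂) := by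
    refine smul_right_injective R h2 ?_
    linear_combination (norm := skip) hAA - k⁻¹ • hT
    match_scalars <;> field_simp <;> ring
  refine ⟨h21, by linear_combination (norm := module) hA, ?_⟩
  linear_combination (norm := skip) k⁻¹ • hT + q ^ 2 • h21
  match_scalars <;> field_simp <;> ring

/-- The relations by which products of the four generators `x i` are reordered. -/
structure StraighteningRelations (q : K) (x : Fin 4 → R) : Prop where
  ne_zero : q ≠ 0
  one_zero : x 1 * x 0 = q ^ 2 • (x 0 * x 1)
  two_one : x 2 * x 1 = q ^ 2 • (x 1 * x 2)
  three_two : x 3 * x 2 = q ^ 2 • (x 2 * x 3)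
  two_zero : x 2 * x 0 = q ^ 2 • (x 0 * x 2) + (q ^ 2 - 1) • (x 1 * x 1)
  three_one : x 3 * x 1 = q ^ 2 • (x 1 * x 3) + (q ^ 2 - 1) • (x 2 * x 2)
  three_zero : x 3 * x 0 = q ^ 2 • (x 0 * x 3) + (q ^ 4 - 1) • (x 1 * x 2)

theorem straighteningRelations_of_quantumSerre (h2 : (2 : K) ≠ 0) (hq : q ≠ 0)
    (hroot : ¬ IsOfFinOrder q) (hxy : quantumSerre q x y = 0) (hyx : quantumSerre q y x = 0) :
    StraighteningRelations q fun i => (⁅qCommutator q y x, ·⁆)^[i] x := by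
  have hpow : ∀ n, 0 < n → q ^ n ≠ 1 := fun n hn h =>
    hroot (isOfFinOrder_iff_pow_eq_one.2 ⟨n, hn, h⟩)
  have h3 : q ^ 2 + 1 + (q⁻¹) ^ 2 ≠ 0 := fun h => hpow 6 (by norm_num) (by
    field_simp at h
    linear_combination (q ^ 2 - 1) * h)
  have hk : q ^ 2 + (q⁻¹) ^ 2 ≠ 0 := fun h => hpow 8 (by norm_num) (by
    field_simp at h
    linear_combination (q ^ 4 - 1) * h)
  have h10 := lie_qCommutator_mul_self hq hxy
  have hDx := lie_qCommutator_left (y := y) hq h10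
  have hCD := commute_qCommutator_lie_qCommutator hq h3 hxy hyx
  generalize qCommutator q y x = C at *
  generalize qCommutator q y ⁅C, x⁆ = D at *
  set T := (2 : K) • D - (q ^ 2 - (q⁻¹) ^ 2) • (C * C) with hT
  have hCC : Commute C (C * C) := (Commute.refl C).mul_right (.refl C)
  have hCT : ⁅T, C⁆ = 0 := ((hCD.smul_right _).sub_right (hCC.smul_right _)).symm.lie_eq
  have hTx : ⁅T, x⁆ = (q ^ 2 + (q⁻¹) ^ 2) • ⁅C, ⁅C, x⁆⁆ := by
    simp only [Ring.lie_def] at hDx ⊢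
    linear_combination (norm := skip) (2 : K) • hDx
    simp only [hT, mul_sub, sub_mul, smul_mul_assoc, mul_smul_comm, mul_assoc]
    match_scalars <;> ring
  have hTlie : ∀ {a b : R}, ⁅T, a⁆ = (q ^ 2 + (q⁻¹) ^ 2) • b →
      ⁅T, ⁅C, a⁆⁆ = (q ^ 2 + (q⁻¹) ^ 2) • ⁅C, b⁆ := fun {a b} h => by
    rw [leibniz_lie, hCT, zero_lie, zero_add, h, LieAlgebra.lie_smul]
  obtain ⟨h21, h20, h30⟩ :=
    straightening_of_lie h2 hk rfl rfl rfl hTx (hTlie hTx) h10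
  obtain ⟨h32, h31, -⟩ :=
    straightening_of_lie h2 hk rfl rfl rfl (hTlie hTx) (hTlie (hTlie hTx)) h21
  exact ⟨hq, h10, h21, h32, h20, h31, h30⟩

end Serre

/-! ### Quantum minors -/

section Minors

variable {K R : Type*} [Field K] [Ring R] [Algebra K R] {q : K} {x : Fin 4 → R}

/-- The quantum minor `p₀` of the Hankel matrix with rows `(x 3, x 2, x 1)` and `(x 2, x 1, x 0)`,
on its last two columns. -/
def minor₀ (q : K) (x : Fin 4 → R) : R := x 2 * x 0 - q ^ 2 • x 1 ^ 2

/-- The quantum minor `p₁` on the first two columns. -/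
def minor₁ (q : K) (x : Fin 4 → R) : R := x 3 * x 1 - q ^ 2 • x 2 ^ 2

/-- The quantum minor on the outer two columns. -/
def minorMid (q : K) (x : Fin 4 → R) : R := x 3 * x 0 - q ^ 2 • (x 2 * x 1)

local notation "𝔭₀" => minor₀ q x
local notation "𝔭₁" => minor₁ q x
local notation "𝔷" => minorMid q x

variable (q x) in
/-- The commutation relations between the quantum minors and the generators. -/
structure MinorRelations : Prop where
  ne_zero : q ≠ 0
  minor₀_zero : 𝔭₀ * x 0 = q ^ 2 • (x 0 * 𝔭₀)
  minor₀_one : 𝔭₀ * x 1 = x 1 * 𝔭₀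
  minor₁_zero : 𝔭₁ * x 0 = q ^ 4 • (x 0 * 𝔭₁)
  minor₁_one : 𝔭₁ * x 1 = q ^ 2 • (x 1 * 𝔭₁)
  minor₁_two : 𝔭₁ * x 2 = x 2 * 𝔭₁
  three_minor₁ : x 3 * 𝔭₁ = q ^ 2 • (𝔭₁ * x 3)
  mid_zero : 𝔷 * x 0 = q ^ 2 • (x 0 * 𝔷) + (q ^ 2 - 1) • (𝔭₀ * x 1)
  mid_one : 𝔷 * x 1 = q ^ 2 • (x 1 * 𝔷) - (1 - (q⁻¹) ^ 2) • (𝔭₁ * x 0)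
  mid_minor₀ : 𝔷 * 𝔭₀ = q ^ 2 • (𝔭₀ * 𝔷)
  minor₁_mid : 𝔭₁ * 𝔷 = q ^ 2 • (𝔷 * 𝔭₁)
  minor₁_minor₀ : 𝔭₁ * 𝔭₀ = q ^ 4 • (𝔭₀ * 𝔭₁)
  mid_mid : 𝔷 * 𝔷 = q ^ 2 • (𝔭₀ * 𝔭₁)
    + (q⁻¹) ^ 2 • (x 3 * (𝔷 * x 0 - q ^ 2 • (𝔭₀ * x 1))) - x 2 * (𝔭₁ * x 0)

theorem mul_mul_of_mul_eq {a b c : R} (h : a * b = c) (s : R) : a * (b * s) = c * s := by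
  rw [← mul_assoc, h]

theorem StraighteningRelations.minorRelations (h : StraighteningRelations q x) :
    MinorRelations q x := by
  have hq := h.ne_zero
  refine ⟨hq, ?_, ?_, ?_, ?_, ?_, ?_, ?_, ?_, ?_, ?_, ?_, ?_⟩
  all_goals
    simp only [minor₀, minor₁, minorMid, pow_succ, pow_zero, one_mul, mul_add, add_mul, mul_sub,
      sub_mul, smul_add, smul_sub, smul_mul_assoc, mul_smul_comm, mul_assoc, h.one_zero, h.two_one,
      h.three_two, h.two_zero, h.three_one, h.three_zero, mul_mul_of_mul_eq h.one_zero,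
      mul_mul_of_mul_eq h.two_one, mul_mul_of_mul_eq h.three_two, mul_mul_of_mul_eq h.two_zero,
      mul_mul_of_mul_eq h.three_one, mul_mul_of_mul_eq h.three_zero]
      <;> match_scalars <;> field_simp <;> ring

/-! ### Three recursive sequences -/

variable (q x) in
/-- The sequence `ζ`, of Chebyshev type in the quantum minors; up to a power of `q`, `ζ n` is the
dual canonical basis element with index `(n, 0, 0, n)`. -/
def zetaSeq : ℕ → R
  | 0 => 1
  | 1 => 𝔷
  | n + 2 => 𝔷 * zetaSeq (n + 1) - q ^ 2 • (𝔭₀ * 𝔭₁ * zetaSeq n)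

mutual

/-- The sequence `ξ`; up to a power of `q`, `ξ n` is the dual canonical basis element with index
`(n, 0, 0, n + 1)`. -/
def xiSeq (q : K) (x : Fin 4 → R) : ℕ → R
  | 0 => x 0
  | n + 1 => minorMid q x * xiSeq q x n - q ^ 2 • (minor₀ q x * omegaSeq q x n)

/-- The companion `ω` of the sequence `ξ`, with leading index `(n, 0, 1, n)`. -/
def omegaSeq (q : K) (x : Fin 4 → R) : ℕ → R
  | 0 => x 1
  | n + 1 => minor₁ q x * xiSeq q x n

end

local notation "ζ" => zetaSeq q x
local notation "ξ" => xiSeq q x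
local notation "ω" => omegaSeq q x

theorem commute_zetaSeq {s : R} (hz : Commute s 𝔷) (hp : Commute s (𝔭₀ * 𝔭₁)) (n : ℕ) :
    Commute s (ζ n) := by
  induction n using Nat.twoStepInduction with
  | zero => exact Commute.one_right s
  | one => exact hz
  | more n ih₀ ih₁ => exact (hz.mul_right ih₁).sub_right ((hp.mul_right ih₀).smul_right _)

namespace MinorRelations

theorem commute_mid (h : MinorRelations q x) : Commute 𝔷 (𝔭₀ * 𝔭₁) := by
  rw [Commute, SemiconjBy, ← mul_assoc, h.mid_minor₀, smul_mul_assoc, mul_assoc, mul_assoc,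
    h.minor₁_mid, mul_smul_comm]

theorem zetaSeq_add_two' (h : MinorRelations q x) (n : ℕ) :
    ζ (n + 2) = ζ (n + 1) * 𝔷 - q ^ 2 • (ζ n * (𝔭₀ * 𝔭₁)) := by
  rw [zetaSeq, (commute_zetaSeq (.refl _) h.commute_mid (n + 1)).eq,
    (commute_zetaSeq h.commute_mid.symm (.refl _) n).eq]

theorem zetaSeq_mul_minor₀ (h : MinorRelations q x) (n : ℕ) :
    ζ n * 𝔭₀ = q ^ (2 * n) • (𝔭₀ * ζ n) := by
  induction n using Nat.twoStepInduction with
  | zero => simp [zetaSeq]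
  | one => exact h.mid_minor₀
  | more n ih₀ ih₁ =>
    simp only [zetaSeq, sub_mul, mul_sub, smul_mul_assoc, mul_smul_comm, mul_assoc, ih₀, ih₁,
      mul_mul_of_mul_eq h.mid_minor₀, mul_mul_of_mul_eq h.minor₁_minor₀]
    match_scalars <;> ring

theorem mid_mul_seq (h : MinorRelations q x) (n : ℕ) :
    𝔷 * ξ n = q ^ 2 • (ξ n * 𝔷) + (q ^ 2 - 1) • (𝔭₀ * ω n) ∧
      𝔷 * ω n = q ^ 2 • (ω n * 𝔷) - (1 - (q⁻¹) ^ 2) • (𝔭₁ * ξ n) := by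
  have hq := h.ne_zero
  induction n with
  | zero => exact ⟨h.mid_zero, h.mid_one⟩
  | succ n ih =>
    obtain ⟨ihξ, ihω⟩ := ih
    simp only [xiSeq, omegaSeq]
    constructor
    · linear_combination (norm := skip) 𝔷 * ihξ - q ^ 2 • (𝔭₀ * ihω)
        + (q ^ 2 - 1) • (h.mid_minor₀ * ω n) - q ^ 2 • (h.mid_minor₀ * ω n)
      simp only [mul_add, mul_sub, sub_mul, smul_mul_assoc, mul_smul_comm, mul_assoc]
      match_scalars <;> field_simp <;> ring
    · linear_combination (norm := skip) 𝔭₁ * ihξ - (q⁻¹) ^ 2 • (h.minor₁_mid * ξ n)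
      simp only [mul_add, mul_sub, smul_mul_assoc, mul_smul_comm, mul_assoc]
      match_scalars <;> field_simp <;> ring

theorem minor₀_mul_minor₁_mul_seq (h : MinorRelations q x) (n : ℕ) :
    𝔭₀ * 𝔭₁ * ξ n = q ^ 6 • (ξ n * (𝔭₀ * 𝔭₁)) ∧ 𝔭₀ * 𝔭₁ * ω n = q ^ 2 • (ω n * (𝔭₀ * 𝔭₁)) := by
  have hq := h.ne_zero
  induction n with
  | zero =>
    constructor
    · simp only [xiSeq, mul_assoc, h.minor₁_zero, mul_smul_comm, smul_mul_assoc,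
        mul_mul_of_mul_eq h.minor₀_zero]
      module
    · simp only [omegaSeq, mul_assoc, h.minor₁_one, mul_smul_comm, mul_mul_of_mul_eq h.minor₀_one]
  | succ n ih =>
    obtain ⟨ihξ, ihω⟩ := ih
    simp only [xiSeq, omegaSeq]
    constructor
    · linear_combination (norm := skip) 𝔷 * ihξ - q ^ 6 • (𝔭₀ * ihω)
        - h.commute_mid.eq * ξ n - q ^ 2 • (𝔭₀ * h.minor₁_minor₀ * ω n)
      simp only [mul_sub, sub_mul, smul_mul_assoc, mul_smul_comm, mul_assoc]
      match_scalars <;> ring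
    · linear_combination (norm := skip) (q⁻¹) ^ 4 • (𝔭₁ * ihξ)
        - (q⁻¹) ^ 4 • (h.minor₁_minor₀ * (𝔭₁ * ξ n))
      simp only [smul_mul_assoc, mul_smul_comm, mul_assoc]
      match_scalars <;> field_simp <;> ring

theorem xiSeq_succ' (h : MinorRelations q x) (n : ℕ) :
    ξ (n + 1) = q ^ 2 • (ξ n * 𝔷) - 𝔭₀ * ω n := by
  rw [xiSeq, (h.mid_mul_seq n).1]
  module

theorem xiSeq_add_two' (h : MinorRelations q x) (n : ℕ) :
    ξ (n + 2) = q ^ 2 • (ξ (n + 1) * 𝔷) - q ^ 6 • (ξ n * (𝔭₀ * 𝔭₁)) := by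
  rw [h.xiSeq_succ' (n + 1), omegaSeq, ← mul_assoc, (h.minor₀_mul_minor₁_mul_seq n).1]

theorem omegaSeq_add_two' (h : MinorRelations q x) (n : ℕ) :
    ω (n + 2) = q ^ 2 • (ω (n + 1) * 𝔷) - q ^ 6 • (ω n * (𝔭₀ * 𝔭₁)) := by
  rw [omegaSeq, h.xiSeq_succ' n, omegaSeq, mul_sub, ← mul_assoc 𝔭₁ 𝔭₀, h.minor₁_minor₀,
    smul_mul_assoc, (h.minor₀_mul_minor₁_mul_seq n).2, mul_smul_comm, mul_assoc]
  module

theorem mul_xiSeq_sub_mul_omegaSeq (h : MinorRelations q x) (n : ℕ) :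
    x 3 * ξ n - q ^ 2 • (x 2 * ω n) = q ^ (2 * n) • ζ (n + 1) := by
  have hq := h.ne_zero
  induction n using Nat.twoStepInduction with
  | zero => simp [xiSeq, omegaSeq, zetaSeq, minorMid]
  | one =>
    simp only [xiSeq, omegaSeq, zetaSeq, mul_one, h.mid_mid]
    match_scalars <;> field_simp
    ring
  | more n ih₀ ih₁ =>
    rw [h.xiSeq_add_two', h.omegaSeq_add_two', h.zetaSeq_add_two']
    linear_combination (norm := skip) q ^ 2 • (ih₁ * 𝔷) - q ^ 6 • (ih₀ * (𝔭₀ * 𝔭₁))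
    simp only [mul_sub, sub_mul, smul_mul_assoc, mul_smul_comm, mul_assoc]
    match_scalars <;> ring

end MinorRelations

theorem xiSeq_succ_eq_zetaSeq_mul (n : ℕ) :
    ξ (n + 1) = ζ (n + 1) * x 0 - q ^ 2 • (ζ n * 𝔭₀ * x 1) := by
  induction n using Nat.twoStepInduction with
  | zero => simp [xiSeq, omegaSeq, zetaSeq]
  | one =>
    simp only [xiSeq, omegaSeq, zetaSeq, mul_sub, sub_mul, mul_smul_comm, smul_mul_assoc, mul_assoc,
      mul_one]
    module
  | more n ih₀ ih₁ =>
    rw [xiSeq, omegaSeq, ih₀, ih₁]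
    simp only [zetaSeq, mul_sub, sub_mul, mul_smul_comm, smul_mul_assoc, mul_assoc]
    module

theorem MinorRelations.xiSeq_succ_eq_mul_zetaSeq (h : MinorRelations q x) (n : ℕ) :
    ξ (n + 1) = q ^ (2 * n + 2) • (x 0 * ζ (n + 1)) - q ^ (2 * n) • (x 1 * (𝔭₀ * ζ n)) := by
  induction n using Nat.twoStepInduction with
  | zero =>
    rw [h.xiSeq_succ']
    simp [xiSeq, omegaSeq, zetaSeq, h.minor₀_one]
  | one =>
    rw [h.xiSeq_add_two', h.xiSeq_succ']
    simp only [xiSeq, omegaSeq, zetaSeq, h.minor₀_one, sub_mul, mul_sub, smul_mul_assoc,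
      mul_smul_comm, mul_assoc, mul_one]
    match_scalars <;> ring
  | more n ih₀ ih₁ =>
    rw [h.xiSeq_add_two']
    linear_combination (norm := skip) q ^ 2 • (ih₁ * 𝔷) - q ^ 6 • (ih₀ * (𝔭₀ * 𝔭₁))
      - q ^ (2 * n + 6) • (x 0 * h.zetaSeq_add_two' (n + 1))
      + q ^ (2 * n + 4) • (x 1 * (𝔭₀ * h.zetaSeq_add_two' n))
    simp only [mul_sub, sub_mul, smul_mul_assoc, mul_smul_comm, mul_assoc]
    match_scalars <;> ring

end Minors

/-! ### Unitriangularity -/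

section Order

theorem tri_trans {a b c : Idx} (hab : tri a b) (hbc : tri b c) : tri a c := by
  obtain ⟨s, r, h⟩ := hab
  obtain ⟨s', r', h'⟩ := hbc
  exact ⟨s + s', r + r', by omega⟩

theorem tri_add_right {a b : Idx} (h : tri a b) (c : Idx) : tri (a + c) (b + c) := by
  obtain ⟨s, r, h⟩ := h
  refine ⟨s, r, ?_⟩
  simp only [Prod.fst_add, Prod.snd_add]
  omega

theorem Nnum_eq_of_tri {a b : Idx} (h : tri a b) : Nnum b = Nnum a := by
  obtain ⟨s, r, h₃, h₂, h₁, h₀⟩ := h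
  rw [Nnum, Nnum, h₃, h₂, h₁, h₀]
  ring

/-- The sum of the two outer exponents; it drops strictly along `⊴`. -/
def height (a : Idx) : ℕ := a.1 + a.2.2.2

theorem height_lt_of_mem_Sset {a b : Idx} (h : b ∈ Sset a) : height b < height a := by
  obtain ⟨⟨s, r, h⟩, hne⟩ := h
  by_contra hle
  refine hne (Prod.ext ?_ (Prod.ext ?_ (Prod.ext ?_ ?_))) <;> simp only [height] at hle <;> omega

theorem Sset_subset_of_tri {a b : Idx} (h : tri a b) : Sset b ⊆ Sset a := by
  rintro c ⟨hbc, hne⟩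
  refine ⟨tri_trans h hbc, ?_⟩
  rintro rfl
  obtain ⟨s, r, h⟩ := h
  obtain ⟨s', r', h'⟩ := hbc
  exact hne (Prod.ext (by omega) (Prod.ext (by omega) (Prod.ext (by omega) (by omega))))

theorem add_right_mem_Sset {a b : Idx} (h : b ∈ Sset a) (c : Idx) : b + c ∈ Sset (a + c) :=
  ⟨tri_add_right h.1 c, fun he => h.2 (add_right_cancel he)⟩

end Order

section Unitriangular

variable {K R : Type*} [Field K] [Ring R] [Algebra K R] {q : K} {x : Fin 4 → R}

/-- The ordered monomial with exponent `a`, rescaled as in the dual PBW basis. -/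
def dualPBW (q : K) (x : Fin 4 → R) (a : Idx) : R :=
  q ^ bexp a • (x 3 ^ a.1 * x 2 ^ a.2.1 * x 1 ^ a.2.2.1 * x 0 ^ a.2.2.2)

/-- The `qℤ[q]`-span of the dual PBW elements whose index lies in `Sset a`. -/
def upperLattice (q : K) (x : Fin 4 → R) (a : Idx) : AddSubgroup R :=
  .closure {y | ∃ b ∈ Sset a, ∃ m : ℕ, y = q ^ (m + 1) • dualPBW q x b}

/-- The first defining property of the dual canonical basis element with index `a`. -/
def IsUnitriangular (q : K) (x : Fin 4 → R) (a : Idx) (y : R) : Prop :=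
  y - dualPBW q x a ∈ upperLattice q x a

theorem isUnitriangular_dualPBW (a : Idx) : IsUnitriangular q x a (dualPBW q x a) := by
  rw [IsUnitriangular, sub_self]
  exact zero_mem _

theorem upperLattice_anti {a b : Idx} (h : tri a b) : upperLattice q x b ≤ upperLattice q x a :=
  AddSubgroup.closure_mono fun _ ⟨c, hc, hy⟩ => ⟨c, Sset_subset_of_tri h hc, hy⟩

theorem pow_smul_mem_upperLattice {a : Idx} {y : R} (hy : y ∈ upperLattice q x a) (m : ℕ) :
    q ^ m • y ∈ upperLattice q x a := by
  induction hy using AddSubgroup.closure_induction with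
  | mem _ hy =>
    obtain ⟨b, hb, k, rfl⟩ := hy
    exact AddSubgroup.subset_closure ⟨b, hb, m + k, by rw [smul_smul, ← pow_add, add_assoc]⟩
  | zero => rw [smul_zero]; exact zero_mem _
  | add _ _ _ _ h₁ h₂ => rw [smul_add]; exact add_mem h₁ h₂
  | neg _ _ h => rw [smul_neg]; exact neg_mem h

namespace IsUnitriangular

theorem pow_smul_mem {a b : Idx} {y : R} (hy : IsUnitriangular q x b y) (hb : b ∈ Sset a) (m : ℕ) :
    q ^ (m + 1) • y ∈ upperLattice q x a := by
  rw [← sub_add_cancel y (dualPBW q x b), smul_add]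
  exact add_mem (pow_smul_mem_upperLattice (upperLattice_anti hb.1 hy) _)
    (AddSubgroup.subset_closure ⟨b, hb, m, rfl⟩)

theorem sub_pow_smul {a b : Idx} {y z : R} (hy : IsUnitriangular q x a y)
    (hz : IsUnitriangular q x b z) (hb : b ∈ Sset a) (m : ℕ) :
    IsUnitriangular q x a (y - q ^ (m + 1) • z) := by
  rw [IsUnitriangular, sub_right_comm]
  exact sub_mem hy (hz.pow_smul_mem hb m)

theorem map {g : R →ₗ[K] R} {c : Idx} {w : Idx → ℕ}
    (hg : ∀ b, IsUnitriangular q x (b + c) (q ^ w b • g (dualPBW q x b)))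
    (hw : ∀ a b, tri a b → w b ≤ w a) {a : Idx} {y : R} (hy : IsUnitriangular q x a y) :
    IsUnitriangular q x (a + c) (q ^ w a • g y) := by
  suffices hlat : ∀ z ∈ upperLattice q x a, q ^ w a • g z ∈ upperLattice q x (a + c) by
    have hadd := add_mem (hlat _ hy) (hg a)
    rwa [map_sub, smul_sub, sub_add_sub_cancel] at hadd
  intro z hz
  induction hz using AddSubgroup.closure_induction with
  | mem _ hz =>
    obtain ⟨b, hb, m, rfl⟩ := hz
    obtain ⟨k, hk⟩ := Nat.exists_eq_add_of_le (hw a b hb.1)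
    have hmem := (hg b).pow_smul_mem (add_right_mem_Sset hb c) (k + m)
    rwa [smul_smul, ← pow_add, show k + m + 1 + w b = w a + (m + 1) by omega, pow_add, mul_smul,
      ← map_smul] at hmem
  | zero => rw [map_zero, smul_zero]; exact zero_mem _
  | add _ _ _ _ h₁ h₂ => rw [map_add, smul_add]; exact add_mem h₁ h₂
  | neg _ _ h => rw [map_neg, smul_neg]; exact neg_mem h

end IsUnitriangular

end Unitriangular

/-! ### Multiplication in the dual PBW basis -/

section Multiplication

variable {K R : Type*} [Field K] [Ring R] [Algebra K R] {q : K} {x : Fin 4 → R}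

theorem mul_pow_of_mul_eq_smul {c : K} {s t : R} (h : s * t = c • (t * s)) (n : ℕ) :
    s * t ^ n = c ^ n • (t ^ n * s) := by
  have hst : SemiconjBy s t (c • t) := by rw [SemiconjBy, h, smul_mul_assoc]
  rw [(hst.pow_right n).eq, smul_pow, smul_mul_assoc]

theorem pow_mul_of_mul_eq_smul {c : K} {s t : R} (h : s * t = c • (t * s)) (n : ℕ) :
    s ^ n * t = c ^ n • (t * s ^ n) := by
  have hst : SemiconjBy t (c • s) s := by rw [SemiconjBy, h, mul_smul_comm]
  rw [← (hst.pow_right n).eq, smul_pow, mul_smul_comm]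

theorem choose_succ_two (n : ℕ) : (n + 1).choose 2 = n.choose 2 + n := by
  rw [Nat.choose_succ_succ' n 1, Nat.choose_one_right, add_comm]

theorem dualPBW_mul_zero (b : Idx) :
    q ^ b.2.2.2 • (dualPBW q x b * x 0) = dualPBW q x (b + (0, 0, 0, 1)) := by
  simp only [dualPBW, bexp, Prod.fst_add, Prod.snd_add, add_zero, choose_succ_two, smul_mul_assoc,
    mul_assoc, ← pow_succ]
  module

theorem three_mul_dualPBW (b : Idx) :
    q ^ b.1 • (x 3 * dualPBW q x b) = dualPBW q x (b + (1, 0, 0, 0)) := by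
  simp only [dualPBW, bexp, Prod.fst_add, Prod.snd_add, add_zero, choose_succ_two, mul_smul_comm,
    ← mul_assoc, ← pow_succ']
  module

namespace StraighteningRelations

theorem dualPBW_mul_one (h : StraighteningRelations q x) (b : Idx) :
    q ^ (2 * b.2.2.2 + b.2.2.1) • (dualPBW q x b * x 1) = dualPBW q x (b + (0, 0, 1, 0)) := by
  simp only [dualPBW, bexp, Prod.fst_add, Prod.snd_add, add_zero, choose_succ_two, smul_mul_assoc,
    pow_succ (x 1), mul_assoc, mul_pow_of_mul_eq_smul h.one_zero, mul_smul_comm]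
  module

theorem two_mul_dualPBW (h : StraighteningRelations q x) (b : Idx) :
    q ^ (2 * b.1 + b.2.1) • (x 2 * dualPBW q x b) = dualPBW q x (b + (0, 1, 0, 0)) := by
  simp only [dualPBW, bexp, Prod.fst_add, Prod.snd_add, add_zero, choose_succ_two, mul_smul_comm,
    pow_succ' (x 2), mul_assoc, mul_mul_of_mul_eq (pow_mul_of_mul_eq_smul h.three_two _),
    smul_mul_assoc]
  module

theorem dualPBW_mul_minor₀ (h : StraighteningRelations q x) (b : Idx) :
    q ^ (3 * b.2.2.2 + 2 * b.2.2.1 + b.2.1) • (dualPBW q x b * minor₀ q x) =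
      dualPBW q x (b + (0, 1, 0, 1))
        - q ^ (b.2.1 + b.2.2.2 + 1) • dualPBW q x (b + (0, 0, 2, 0)) := by
  obtain ⟨b₃, b₂, b₁, b₀⟩ := b
  have hcomm : Commute (minor₀ q x) (x 1 ^ b₁) := Commute.pow_right h.minorRelations.minor₀_one b₁
  have hx₁ : x 1 ^ (b₁ + 2) = x 1 ^ 2 * x 1 ^ b₁ := by rw [add_comm, pow_add]
  have hmove : (q ^ 2) ^ b₀ • (x 1 ^ b₁ * (x 0 ^ b₀ * minor₀ q x)) =
      minor₀ q x * (x 1 ^ b₁ * x 0 ^ b₀) := by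
    rw [← mul_smul_comm, ← mul_pow_of_mul_eq_smul h.minorRelations.minor₀_zero, ← mul_assoc,
      ← hcomm.eq, mul_assoc]
  calc
    _ = q ^ (bexp (b₃, b₂, b₁, b₀) + b₀ + 2 * b₁ + b₂) •
        (x 3 ^ b₃ * (x 2 ^ b₂ * (minor₀ q x * (x 1 ^ b₁ * x 0 ^ b₀)))) := by
      simp only [← hmove, dualPBW, smul_mul_assoc, mul_smul_comm, mul_assoc]
      module
    _ = _ := by
      simp only [dualPBW, bexp, minor₀, Prod.mk_add_mk, add_zero, choose_succ_two, sub_mul, mul_sub,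
        smul_mul_assoc, mul_smul_comm, mul_assoc, pow_succ' (x 0), pow_succ (x 2), hx₁,
        mul_mul_of_mul_eq (pow_mul_of_mul_eq_smul h.one_zero b₁)]
      match_scalars <;> ring

theorem minor₁_mul_dualPBW (h : StraighteningRelations q x) (b : Idx) :
    q ^ (3 * b.1 + 2 * b.2.1 + b.2.2.1) • (minor₁ q x * dualPBW q x b) =
      dualPBW q x (b + (1, 0, 1, 0))
        - q ^ (b.1 + b.2.2.1 + 1) • dualPBW q x (b + (0, 2, 0, 0)) := by
  obtain ⟨b₃, b₂, b₁, b₀⟩ := b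
  have hcomm : Commute (minor₁ q x) (x 2 ^ b₂) := Commute.pow_right h.minorRelations.minor₁_two b₂
  have hmove : (q ^ 2) ^ b₃ • (minor₁ q x * (x 3 ^ b₃ * x 2 ^ b₂)) =
      x 3 ^ b₃ * (x 2 ^ b₂ * minor₁ q x) := by
    rw [← mul_assoc, ← smul_mul_assoc, ← pow_mul_of_mul_eq_smul h.minorRelations.three_minor₁,
      mul_assoc, hcomm.eq]
  calc
    _ = q ^ (bexp (b₃, b₂, b₁, b₀) + b₃ + 2 * b₂ + b₁) •
        (x 3 ^ b₃ * (x 2 ^ b₂ * minor₁ q x) * (x 1 ^ b₁ * x 0 ^ b₀)) := by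
      simp only [← hmove, dualPBW, smul_mul_assoc, mul_smul_comm, mul_assoc]
      module
    _ = _ := by
      simp only [dualPBW, bexp, minor₁, Prod.mk_add_mk, add_zero, choose_succ_two, sub_mul, mul_sub,
        smul_mul_assoc, mul_smul_comm, mul_assoc, pow_succ (x 3), pow_succ' (x 1), pow_add (x 2),
        mul_mul_of_mul_eq (mul_pow_of_mul_eq_smul h.three_two b₂)]
      match_scalars <;> ring

end StraighteningRelations

namespace IsUnitriangular

variable {a : Idx} {y : R}

theorem mul_zero (hy : IsUnitriangular q x a y) :
    IsUnitriangular q x (a + (0, 0, 0, 1)) (q ^ a.2.2.2 • (y * x 0)) :=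
  hy.map (g := .mulRight K (x 0)) (w := fun a => a.2.2.2)
    (fun b => by
      rw [LinearMap.mulRight_apply, dualPBW_mul_zero]
      exact isUnitriangular_dualPBW _)
    fun a b ⟨s, r, h⟩ => by omega

theorem three_mul (hy : IsUnitriangular q x a y) :
    IsUnitriangular q x (a + (1, 0, 0, 0)) (q ^ a.1 • (x 3 * y)) :=
  hy.map (g := .mulLeft K (x 3)) (w := fun a => a.1)
    (fun b => by
      rw [LinearMap.mulLeft_apply, three_mul_dualPBW]
      exact isUnitriangular_dualPBW _)
    fun a b ⟨s, r, h⟩ => by omega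

theorem mul_one (hx : StraighteningRelations q x) (hy : IsUnitriangular q x a y) :
    IsUnitriangular q x (a + (0, 0, 1, 0)) (q ^ (2 * a.2.2.2 + a.2.2.1) • (y * x 1)) :=
  hy.map (g := .mulRight K (x 1)) (w := fun a => 2 * a.2.2.2 + a.2.2.1)
    (fun b => by
      rw [LinearMap.mulRight_apply, hx.dualPBW_mul_one]
      exact isUnitriangular_dualPBW _)
    fun a b ⟨s, r, h⟩ => by omega

theorem two_mul (hx : StraighteningRelations q x) (hy : IsUnitriangular q x a y) :
    IsUnitriangular q x (a + (0, 1, 0, 0)) (q ^ (2 * a.1 + a.2.1) • (x 2 * y)) :=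
  hy.map (g := .mulLeft K (x 2)) (w := fun a => 2 * a.1 + a.2.1)
    (fun b => by
      rw [LinearMap.mulLeft_apply, hx.two_mul_dualPBW]
      exact isUnitriangular_dualPBW _)
    fun a b ⟨s, r, h⟩ => by omega

theorem mul_minor₀ (hx : StraighteningRelations q x) (hy : IsUnitriangular q x a y) :
    IsUnitriangular q x (a + (0, 1, 0, 1))
      (q ^ (3 * a.2.2.2 + 2 * a.2.2.1 + a.2.1) • (y * minor₀ q x)) :=
  hy.map (g := .mulRight K (minor₀ q x)) (w := fun a => 3 * a.2.2.2 + 2 * a.2.2.1 + a.2.1)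
    (fun b => by
      rw [LinearMap.mulRight_apply, hx.dualPBW_mul_minor₀]
      refine (isUnitriangular_dualPBW _).sub_pow_smul (isUnitriangular_dualPBW _) ?_ _
      exact ⟨⟨0, 1, by simp⟩, by simp⟩)
    fun a b ⟨s, r, h⟩ => by omega

theorem minor₁_mul (hx : StraighteningRelations q x) (hy : IsUnitriangular q x a y) :
    IsUnitriangular q x (a + (1, 0, 1, 0))
      (q ^ (3 * a.1 + 2 * a.2.1 + a.2.2.1) • (minor₁ q x * y)) :=
  hy.map (g := .mulLeft K (minor₁ q x)) (w := fun a => 3 * a.1 + 2 * a.2.1 + a.2.2.1)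
    (fun b => by
      rw [LinearMap.mulLeft_apply, hx.minor₁_mul_dualPBW]
      refine (isUnitriangular_dualPBW _).sub_pow_smul (isUnitriangular_dualPBW _) ?_ _
      exact ⟨⟨1, 0, by simp⟩, by simp⟩)
    fun a b ⟨s, r, h⟩ => by omega

end IsUnitriangular

end Multiplication

/-! ### The normalised sequences -/

section Scaled

variable {K R : Type*} [Field K] [Ring R] [Algebra K R]

/-- The normalisation of `zetaSeq` with leading term the dual PBW element of `(n, 0, 0, n)`. -/
def scaledZeta (q : K) (x : Fin 4 → R) (n : ℕ) : R := q ^ (4 * n.choose 2) • zetaSeq q x n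

/-- The normalisation of `xiSeq` with leading term the dual PBW element of `(n, 0, 0, n + 1)`. -/
def scaledXi (q : K) (x : Fin 4 → R) (n : ℕ) : R := q ^ (4 * n.choose 2 + n) • xiSeq q x n

/-- The normalisation of `omegaSeq` with leading term the dual PBW element of `(n, 0, 1, n)`. -/
def scaledOmega (q : K) (x : Fin 4 → R) (n : ℕ) : R := q ^ (4 * n.choose 2) • omegaSeq q x n

/-- The multiple of `zetaSeq q x n * minor₀ q x` with leading term the dual PBW element of
`(n, 1, 0, n + 1)`. -/
def scaledZetaMinor (q : K) (x : Fin 4 → R) (n : ℕ) : R :=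
  q ^ (3 * n) • (scaledZeta q x n * minor₀ q x)

variable {q : K} {x : Fin 4 → R}

local notation "Z" => scaledZeta q x
local notation "X" => scaledXi q x
local notation "W" => scaledOmega q x
local notation "P" => scaledZetaMinor q x

theorem scaledZeta_zero : Z 0 = 1 := by simp [scaledZeta, zetaSeq]

theorem scaledXi_zero : X 0 = x 0 := by simp [scaledXi, xiSeq]

theorem scaledOmega_zero : W 0 = x 1 := by simp [scaledOmega, omegaSeq]

theorem scaledXi_succ (n : ℕ) :
    X (n + 1) = q ^ (n + 1) • (Z (n + 1) * x 0) - q ^ (2 * n + 3) • (P n * x 1) := by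
  simp only [scaledXi, scaledZeta, scaledZetaMinor, xiSeq_succ_eq_zetaSeq_mul, choose_succ_two,
    smul_mul_assoc]
  match_scalars <;> ring

theorem scaledOmega_succ (n : ℕ) : W (n + 1) = q ^ (3 * n) • (minor₁ q x * X n) := by
  simp only [scaledOmega, scaledXi, omegaSeq, choose_succ_two, mul_smul_comm]
  module

namespace MinorRelations

theorem scaledXi_succ' (h : MinorRelations q x) (n : ℕ) :
    X (n + 1) = q ^ (3 * n + 3) • (x 0 * Z (n + 1)) - q ^ (2 * n + 1) • (x 1 * P n) := by
  simp only [scaledXi, scaledZeta, scaledZetaMinor, h.xiSeq_succ_eq_mul_zetaSeq,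
    h.zetaSeq_mul_minor₀, choose_succ_two, smul_mul_assoc, mul_smul_comm]
  match_scalars <;> ring

theorem scaledZeta_succ (h : MinorRelations q x) (n : ℕ) :
    Z (n + 1) = q ^ n • (x 3 * X n) - q ^ (2 * n + 2) • (x 2 * W n) := by
  simp only [scaledZeta, scaledXi, scaledOmega, choose_succ_two, mul_smul_comm]
  linear_combination (norm := module)
    - q ^ (4 * n.choose 2 + 2 * n) • h.mul_xiSeq_sub_mul_omegaSeq n

end MinorRelations

namespace StraighteningRelations

theorem isUnitriangular_scaledZetaMinor (h : StraighteningRelations q x) {n : ℕ}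
    (hZ : IsUnitriangular q x (n, 0, 0, n) (Z n)) : IsUnitriangular q x (n, 1, 0, n + 1) (P n) := by
  rw [scaledZetaMinor]
  simpa only [Prod.mk_add_mk, add_zero, zero_add, mul_zero] using hZ.mul_minor₀ h

theorem isUnitriangular_scaled (h : StraighteningRelations q x) (n : ℕ) :
    IsUnitriangular q x (n, 0, 0, n) (Z n) ∧ IsUnitriangular q x (n, 0, 0, n + 1) (X n) ∧
      IsUnitriangular q x (n, 0, 1, n) (W n) := by
  induction n with
  | zero =>
    rw [scaledZeta_zero, scaledXi_zero, scaledOmega_zero]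
    refine ⟨?_, ?_, ?_⟩ <;> simp [IsUnitriangular, dualPBW, bexp]
  | succ n ih =>
    obtain ⟨hZ, hX, hW⟩ := ih
    have hZ' : IsUnitriangular q x (n + 1, 0, 0, n + 1) (Z (n + 1)) := by
      rw [h.minorRelations.scaledZeta_succ, add_comm (2 * n) 2, pow_add, mul_smul]
      exact hX.three_mul.sub_pow_smul (hW.two_mul h) ⟨⟨1, 1, by simp⟩, by simp⟩ 1
    have hX' : IsUnitriangular q x (n + 1, 0, 0, n + 2) (X (n + 1)) := by
      rw [scaledXi_succ, show q ^ (2 * n + 3) = q ^ (0 + 1) * q ^ (2 * (n + 1)) by ring, mul_smul]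
      exact hZ'.mul_zero.sub_pow_smul
        ((h.isUnitriangular_scaledZetaMinor hZ).mul_one h) ⟨⟨1, 1, by simp⟩, by simp⟩ 0
    refine ⟨hZ', hX', ?_⟩
    rw [scaledOmega_succ]
    simpa only [Prod.mk_add_mk, add_zero, zero_add, mul_zero] using hX.minor₁_mul h

end StraighteningRelations

end Scaled

/-! ### The action of the anti-automorphism -/

section TwistedAntihom

variable {K R : Type*} [Field K] [Ring R] [Algebra K R] {q : K} {x : Fin 4 → R}
  {bar : K →+* K} {σ : R →ₛₗ[bar] R}

/-- `σ` is an anti-homomorphism of rings, semilinear over `q ↦ q⁻¹`, and acts on the generators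
by `x i ↦ q ^ (2 * i) • x i`. -/
structure IsTwistedAntihom (q : K) (x : Fin 4 → R) (bar : K →+* K) (σ : R →ₛₗ[bar] R) : Prop where
  bar_q : bar q = q⁻¹
  map_one : σ 1 = 1
  map_mul : ∀ s t, σ (s * t) = σ t * σ s
  map_gen_zero : σ (x 0) = x 0
  map_gen_one : σ (x 1) = q ^ 2 • x 1
  map_gen_two : σ (x 2) = q ^ 4 • x 2
  map_gen_three : σ (x 3) = q ^ 6 • x 3

theorem two_mul_choose_two_cast (n : ℕ) : 2 * ((n.choose 2 : ℕ) : ℤ) = n * n - n := by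
  induction n with
  | zero => simp
  | succ n ih =>
    rw [choose_succ_two]
    push_cast
    linear_combination ih

namespace IsTwistedAntihom

theorem map_pow_smul (hσ : IsTwistedAntihom q x bar σ) (n : ℕ) (s : R) :
    σ (q ^ n • s) = (q⁻¹) ^ n • σ s := by
  rw [map_smulₛₗ, map_pow, hσ.bar_q]

theorem map_minor₀ (hσ : IsTwistedAntihom q x bar σ) (h : StraighteningRelations q x) :
    σ (minor₀ q x) = q ^ 2 • minor₀ q x := by
  have hq := h.ne_zero
  simp only [minor₀, pow_two (x 1), map_sub, hσ.map_pow_smul, hσ.map_mul, hσ.map_gen_zero,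
    hσ.map_gen_one, hσ.map_gen_two, mul_smul_comm, smul_mul_assoc]
  rw [h.two_zero]
  match_scalars <;> field_simp
  ring

theorem map_minor₁ (hσ : IsTwistedAntihom q x bar σ) (h : StraighteningRelations q x) :
    σ (minor₁ q x) = q ^ 6 • minor₁ q x := by
  have hq := h.ne_zero
  simp only [minor₁, pow_two (x 2), map_sub, hσ.map_pow_smul, hσ.map_mul, hσ.map_gen_one,
    hσ.map_gen_two, hσ.map_gen_three, mul_smul_comm, smul_mul_assoc]
  rw [h.three_one]
  match_scalars <;> field_simp
  ring

theorem map_minorMid (hσ : IsTwistedAntihom q x bar σ) (h : StraighteningRelations q x) :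
    σ (minorMid q x) = q ^ 4 • minorMid q x := by
  have hq := h.ne_zero
  simp only [minorMid, map_sub, hσ.map_pow_smul, hσ.map_mul, hσ.map_gen_zero, hσ.map_gen_one,
    hσ.map_gen_two, hσ.map_gen_three, mul_smul_comm, smul_mul_assoc]
  simp only [h.three_zero, h.two_one]
  match_scalars <;> field_simp
  ring

theorem map_zetaSeq (hσ : IsTwistedAntihom q x bar σ) (h : StraighteningRelations q x) (n : ℕ) :
    σ (zetaSeq q x n) = q ^ (4 * n) • zetaSeq q x n := by
  have hq := h.ne_zero
  induction n using Nat.twoStepInduction with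
  | zero => simp [zetaSeq, hσ.map_one]
  | one => exact hσ.map_minorMid h
  | more n ih₀ ih₁ =>
    conv_rhs => rw [h.minorRelations.zetaSeq_add_two']
    simp only [zetaSeq, map_sub, hσ.map_pow_smul, hσ.map_mul, ih₀, ih₁, hσ.map_minor₀ h,
      hσ.map_minor₁ h, hσ.map_minorMid h, mul_smul_comm, smul_mul_assoc,
      h.minorRelations.minor₁_minor₀]
    match_scalars <;> field_simp <;> ring

theorem map_xiSeq (hσ : IsTwistedAntihom q x bar σ) (h : StraighteningRelations q x) (n : ℕ) :
    σ (xiSeq q x n) = q ^ (2 * n) • xiSeq q x n := by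
  cases n with
  | zero => simp [xiSeq, hσ.map_gen_zero]
  | succ n =>
    conv_rhs => rw [h.minorRelations.xiSeq_succ_eq_mul_zetaSeq]
    simp only [xiSeq_succ_eq_zetaSeq_mul, map_sub, hσ.map_pow_smul, hσ.map_mul, hσ.map_zetaSeq h,
      hσ.map_minor₀ h, hσ.map_gen_zero, hσ.map_gen_one, mul_smul_comm, smul_mul_assoc]
    match_scalars <;> field_simp <;> ring

theorem map_scaledZeta (hσ : IsTwistedAntihom q x bar σ) (h : StraighteningRelations q x) (n : ℕ) :
    σ (scaledZeta q x n) = q ^ (-Nnum (n, 0, 0, n)) • scaledZeta q x n := by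
  rw [scaledZeta, hσ.map_pow_smul, hσ.map_zetaSeq h, smul_smul, smul_smul]
  congr 1
  simp only [← zpow_natCast, inv_zpow', ← zpow_add₀ h.ne_zero]
  congr 1
  simp only [Nnum]
  push_cast
  linear_combination (-4) * two_mul_choose_two_cast n

theorem map_scaledXi (hσ : IsTwistedAntihom q x bar σ) (h : StraighteningRelations q x) (n : ℕ) :
    σ (scaledXi q x n) = q ^ (-Nnum (n, 0, 0, n + 1)) • scaledXi q x n := by
  rw [scaledXi, hσ.map_pow_smul, hσ.map_xiSeq h, smul_smul, smul_smul]
  congr 1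
  simp only [← zpow_natCast, inv_zpow', ← zpow_add₀ h.ne_zero]
  congr 1
  simp only [Nnum]
  push_cast
  linear_combination (-4) * two_mul_choose_two_cast n

theorem map_scaledZetaMinor (hσ : IsTwistedAntihom q x bar σ) (h : StraighteningRelations q x)
    (n : ℕ) :
    σ (scaledZetaMinor q x n) = q ^ (-Nnum (n, 1, 0, n + 1)) • scaledZetaMinor q x n := by
  rw [scaledZetaMinor, hσ.map_pow_smul, hσ.map_mul, hσ.map_scaledZeta h, hσ.map_minor₀ h,
    scaledZeta]
  simp only [mul_smul_comm, smul_mul_assoc, smul_smul, h.minorRelations.zetaSeq_mul_minor₀]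
  congr 1
  simp only [← zpow_natCast, inv_zpow', ← zpow_add₀ h.ne_zero]
  congr 1
  simp only [Nnum]
  push_cast
  ring

end IsTwistedAntihom

end TwistedAntihom

/-! ### Uniqueness of the dual canonical basis -/

section Uniqueness

open Polynomial

variable {K R : Type*} [Field K] [Ring R] [Algebra K R] {q : K} {x : Fin 4 → R} {a : Idx}

theorem mul_aeval_smul_dualPBW_mem_upperLattice {b : Idx} (hb : b ∈ Sset a) (P : ℤ[X]) :
    (q * aeval q P) • dualPBW q x b ∈ upperLattice q x a := by
  simp only [aeval_eq_sum_range, Finset.mul_sum, Finset.sum_smul, mul_smul_comm, smul_assoc,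
    ← pow_succ']
  refine sum_mem fun m _ => zsmul_mem ?_ _
  exact AddSubgroup.subset_closure ⟨b, hb, m, rfl⟩

theorem mem_upperLattice {y : R} : y ∈ upperLattice q x a ↔ ∃ f : Idx →₀ ℤ[X],
    (f.support : Set Idx) ⊆ Sset a ∧ y = f.sum fun b P => (q * aeval q P) • dualPBW q x b := by
  constructor
  · intro hy
    induction hy using AddSubgroup.closure_induction with
    | mem _ hy =>
      obtain ⟨b, hb, m, rfl⟩ := hy
      refine ⟨.single b (X ^ m), fun c hc => ?_, ?_⟩
      · rwa [Finset.mem_singleton.1 (Finsupp.support_single_subset hc)]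
      · rw [Finsupp.sum_single_index (by simp), map_pow, aeval_X, pow_succ']
    | zero => exact ⟨0, by simp, by simp⟩
    | add _ _ _ _ h₁ h₂ =>
      obtain ⟨f, hf, rfl⟩ := h₁
      obtain ⟨g, hg, rfl⟩ := h₂
      refine ⟨f + g, fun b hb => ?_, ?_⟩
      · exact (Finset.mem_union.1 (Finsupp.support_add hb)).elim (@hf b) (@hg b)
      · rw [Finsupp.sum_add_index' (by simp) fun b P Q => by rw [map_add, mul_add, add_smul]]
    | neg _ _ h =>
      obtain ⟨f, hf, rfl⟩ := h
      refine ⟨-f, by rwa [Finsupp.support_neg], ?_⟩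
      rw [Finsupp.sum_neg_index (by simp)]
      simp only [map_neg, mul_neg, neg_smul, Finsupp.sum_neg]
  · rintro ⟨f, hf, rfl⟩
    exact sum_mem fun b hb => mul_aeval_smul_dualPBW_mem_upperLattice (hf hb) _

theorem upperLattice_le_lowerSpan :
    upperLattice q x a ≤ (lowerSpan K (dualPBW q x) height (height a)).toAddSubgroup := by
  refine (AddSubgroup.closure_le _).2 ?_
  rintro _ ⟨b, hb, m, rfl⟩
  exact Submodule.smul_mem _ _ (mem_lowerSpan (height_lt_of_mem_Sset hb))

variable {bar : K →+* K} {σ : R →ₛₗ[bar] R}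

theorem eq_zero_of_mem_upperLattice (hq : Transcendental ℤ q) (hbar : bar q = q⁻¹)
    (hE : LinearIndependent K (dualPBW q x))
    (hσE : ∀ b, σ (dualPBW q x b) - q ^ (-Nnum b) • dualPBW q x b ∈
      lowerSpan K (dualPBW q x) height (height b))
    {y : R} (hy : y ∈ upperLattice q x a) (hσy : σ y = q ^ (-Nnum a) • y) : y = 0 := by
  obtain ⟨f, hf, rfl⟩ := mem_upperLattice.1 hy
  have hq₀ : q ≠ 0 := fun h0 => hq (h0 ▸ isAlgebraic_zero)
  set g : Idx →₀ K := f.mapRange (fun P => q * aeval q P) (by simp) with hg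
  have hfg : (f.sum fun b P => (q * aeval q P) • dualPBW q x b)
      = Finsupp.linearCombination K (dualPBW q x) g := by
    rw [Finsupp.linearCombination_apply, hg, Finsupp.sum_mapRange_index (by simp)]
  have hg₀ : g = 0 := by
    rw [hfg] at hσy
    refine eq_zero_of_map_linearCombination_eq_smul hE hσE (zpow_ne_zero _ hq₀)
      (fun b hb => ?_) (fun b hb => ?_) hσy
    · rw [Nnum_eq_of_tri (hf (Finsupp.support_mapRange hb)).1]
    · rw [hg, Finsupp.mapRange_apply] at hb ⊢
      rw [eq_zero_of_map_mul_aeval_eq hq hbar hb, map_zero, mul_zero]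
  rw [hfg, hg₀, map_zero]

theorem eq_of_isUnitriangular (hq : Transcendental ℤ q) (hbar : bar q = q⁻¹)
    (hE : LinearIndependent K (dualPBW q x)) {B : Idx → R} (hB : ∀ b, IsUnitriangular q x b (B b))
    (hσB : ∀ b, σ (B b) = q ^ (-Nnum b) • B b) {y : R} (hy : IsUnitriangular q x a y)
    (hσy : σ y = q ^ (-Nnum a) • y) : B a = y := by
  have hσE := map_sub_smul_mem_lowerSpan (fun b => upperLattice_le_lowerSpan (hB b)) hσB
  refine sub_eq_zero.1 (eq_zero_of_mem_upperLattice (a := a) hq hbar hE hσE ?_ ?_)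
  · rw [← sub_sub_sub_cancel_right _ _ (dualPBW q x a)]
    exact sub_mem (hB a) hy
  · rw [map_sub, hσB, hσy, smul_sub]

end Uniqueness

/-! ### The generators of `S` -/

section Generators

theorem StraighteningRelations.smul {K R : Type*} [Field K] [Ring R] [Algebra K R] {q : K}
    {x : Fin 4 → R} (h : StraighteningRelations q x) (k : K) :
    StraighteningRelations q fun i => k ^ (i : ℕ) • x i := by
  refine ⟨h.ne_zero, ?_, ?_, ?_, ?_, ?_, ?_⟩
  all_goals
    simp only [smul_mul_assoc, mul_smul_comm, h.one_zero, h.two_one, h.three_two, h.two_zero,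
      h.three_one, h.three_zero, Fin.coe_ofNat_eq_mod]
    module

theorem StraighteningRelations.of_injective {K R S : Type*} [Field K] [Ring R] [Algebra K R]
    [Ring S] [Algebra K S] {q : K} {x : Fin 4 → R} {f : R →ₐ[K] S} (hf : Function.Injective f)
    (h : StraighteningRelations q fun i => f (x i)) : StraighteningRelations q x := by
  refine ⟨h.ne_zero, hf ?_, hf ?_, hf ?_, hf ?_, hf ?_, hf ?_⟩ <;>
    simp only [map_add, map_smul, map_mul]
  exacts [h.one_zero, h.two_one, h.three_two, h.two_zero, h.three_one, h.three_zero]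

/-- The generators `uᵢ` of `S`, as a family indexed by `i`. -/
def uGen : Fin 4 → Sgen := ![us0, us1, us2, us3]

theorem qq_ne_zero : qq ≠ 0 := RatFunc.X_ne_zero

theorem quantumSerre_E1_E2 : quantumSerre qq E1 E2 = 0 := by
  simpa only [quantumSerre, E1, E2, box3, map_add, map_sub, map_mul, map_pow, map_smul, map_zero]
    using RingQuot.mkAlgHom_rel F SerreRel.rel1

theorem quantumSerre_E2_E1 : quantumSerre qq E2 E1 = 0 := by
  simpa only [quantumSerre, E1, E2, box3, map_add, map_sub, map_mul, map_pow, map_smul, map_zero]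
    using RingQuot.mkAlgHom_rel F SerreRel.rel2

theorem iterate_lie_smul {K R : Type*} [Field K] [Ring R] [Algebra K R] (k : K) (T s : R) (n : ℕ) :
    (⁅k • T, ·⁆)^[n] s = k ^ n • (⁅T, ·⁆)^[n] s := by
  induction n with
  | zero => simp
  | succ n ih =>
    rw [Function.iterate_succ_apply', Function.iterate_succ_apply', ih, Ring.lie_def, Ring.lie_def]
    simp only [smul_mul_assoc, mul_smul_comm]
    module

theorem coe_uGen (i : Fin 4) : (uGen i : U) =
    ((qq + qq⁻¹)⁻¹ * ((1 - (qq⁻¹) ^ 2)⁻¹) ^ 2) ^ (i : ℕ) • (⁅qCommutator qq E2 E1, ·⁆)^[i] E1 := by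
  rw [mul_comm, mul_pow, mul_smul, ← iterate_lie_smul, ← pow_mul]
  fin_cases i
  · simp [uGen, us0, u0, v0]
  all_goals rfl

theorem straighteningRelations_uGen : StraighteningRelations qq uGen := by
  have hroot := not_isOfFinOrder_of_transcendental transcendental_qq
  refine .of_injective (f := Sgen.val) Subtype.val_injective ?_
  simpa only [Subalgebra.coe_val, coe_uGen] using
    (straighteningRelations_of_quantumSerre two_ne_zero qq_ne_zero hroot quantumSerre_E1_E2
      quantumSerre_E2_E1).smul _

end Generators

/-! ### The dual canonical basis -/

section DualCanonicalBasis

variable {bar : F →+* F} {σ : Sgen → Sgen} {B : Idx → Sgen}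

theorem linearIndependent_dualPBW_uGen (hPBW : LinearIndependent F mon) :
    LinearIndependent F (dualPBW qq uGen) :=
  hPBW.units_smul fun a => Units.mk0 (qq ^ bexp a) (pow_ne_zero _ qq_ne_zero)

theorem cond1.isUnitriangular {a : Idx} (h : cond1 B a) : IsUnitriangular qq uGen a (B a) :=
  mem_upperLattice.2 h

/-- The semilinear map underlying the anti-automorphism `σ`. -/
def SigmaHyp.toSemilinearMap (hσ : SigmaHyp bar σ) : Sgen →ₛₗ[bar] Sgen where
  toFun := σ
  map_add' := hσ.2.2.1
  map_smul' := hσ.2.2.2.2.1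

theorem SigmaHyp.isTwistedAntihom (hσ : SigmaHyp bar σ) :
    IsTwistedAntihom qq uGen bar hσ.toSemilinearMap := by
  have hone : σ 1 = 1 := by
    obtain ⟨s, hs⟩ := hσ.2.1.2 1
    have hmul := hσ.2.2.2.1 1 s
    rwa [one_mul, hs, one_mul, eq_comm] at hmul
  obtain ⟨hbar, -, -, hmul, -, h₀, h₁, h₂, h₃⟩ := hσ
  exact ⟨hbar, hone, hmul, h₀, h₁, h₂, h₃⟩

theorem DCB.eq_of_isUnitriangular (hB : DCB bar σ B) (hPBW : LinearIndependent F mon)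
    (hσ : SigmaHyp bar σ) {a : Idx} {y : Sgen} (hy : IsUnitriangular qq uGen a y)
    (hσy : σ y = qq ^ (-Nnum a) • y) : B a = y :=
  _root_.eq_of_isUnitriangular (σ := hσ.toSemilinearMap) transcendental_qq hσ.1
    (linearIndependent_dualPBW_uGen hPBW) (fun b => (hB b).1.isUnitriangular) (fun b => (hB b).2)
    hy hσy

theorem DCB.eq_scaledZeta (hB : DCB bar σ B) (hPBW : LinearIndependent F mon)
    (hσ : SigmaHyp bar σ) (n : ℕ) : B (n, 0, 0, n) = scaledZeta qq uGen n :=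
  hB.eq_of_isUnitriangular hPBW hσ (straighteningRelations_uGen.isUnitriangular_scaled n).1
    (hσ.isTwistedAntihom.map_scaledZeta straighteningRelations_uGen n)

theorem DCB.eq_scaledXi (hB : DCB bar σ B) (hPBW : LinearIndependent F mon)
    (hσ : SigmaHyp bar σ) (n : ℕ) : B (n, 0, 0, n + 1) = scaledXi qq uGen n :=
  hB.eq_of_isUnitriangular hPBW hσ (straighteningRelations_uGen.isUnitriangular_scaled n).2.1
    (hσ.isTwistedAntihom.map_scaledXi straighteningRelations_uGen n)

theorem DCB.eq_scaledZetaMinor (hB : DCB bar σ B) (hPBW : LinearIndependent F mon)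
    (hσ : SigmaHyp bar σ) (n : ℕ) : B (n, 1, 0, n + 1) = scaledZetaMinor qq uGen n :=
  hB.eq_of_isUnitriangular hPBW hσ
    (straighteningRelations_uGen.isUnitriangular_scaledZetaMinor
      (straighteningRelations_uGen.isUnitriangular_scaled n).1)
    (hσ.isTwistedAntihom.map_scaledZetaMinor straighteningRelations_uGen n)

theorem Bz_natCast (B : Idx → Sgen) (a b c d : ℕ) : Bz B (a, b, c, d) = B (a, b, c, d) := by
  simp [Bz]

end DualCanonicalBasis

/-- For every `n ≥ 1` the dual canonical basis elements satisfy
`B[n−1,0,0,n] = q^{n−1} B[n−1,0,0,n−1] u₀ − q^{2n−1} B[n−2,1,0,n−1] u₁`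
`= q^{3n−3} u₀ B[n−1,0,0,n−1] − q^{2n−3} u₁ B[n−2,1,0,n−1]`. -/
theorem stmt11 (bar : F →+* F) (σ : Sgen → Sgen) (B : Idx → Sgen)
    (hPBW : LinearIndependent F mon) (hσ : SigmaHyp bar σ) (hB : DCB bar σ B) (n : ℕ) (hn : 1 ≤ n) :
    Bz B ((n : ℤ) - 1, 0, 0, (n : ℤ))
        = qq ^ ((n : ℤ) - 1) • (Bz B ((n : ℤ) - 1, 0, 0, (n : ℤ) - 1) * us0)
          - qq ^ (2 * (n : ℤ) - 1) • (Bz B ((n : ℤ) - 2, 1, 0, (n : ℤ) - 1) * us1) ∧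
    Bz B ((n : ℤ) - 1, 0, 0, (n : ℤ))
        = qq ^ (3 * (n : ℤ) - 3) • (us0 * Bz B ((n : ℤ) - 1, 0, 0, (n : ℤ) - 1))
          - qq ^ (2 * (n : ℤ) - 3) • (us1 * Bz B ((n : ℤ) - 2, 1, 0, (n : ℤ) - 1)) := by
  obtain ⟨m, rfl⟩ := Nat.exists_eq_add_of_le' hn
  rw [show ((m + 1 : ℕ) : ℤ) - 1 = m by push_cast; ring]
  have hXi : Bz B (m, 0, 0, (m + 1 : ℕ)) = scaledXi qq uGen m :=
    (Bz_natCast B m 0 0 (m + 1)).trans (hB.eq_scaledXi hPBW hσ m)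
  have hZeta : Bz B (m, 0, 0, m) = scaledZeta qq uGen m :=
    (Bz_natCast B m 0 0 m).trans (hB.eq_scaledZeta hPBW hσ m)
  rw [hXi, hZeta]
  cases m with
  | zero =>
    have hMinor : Bz B (((0 + 1 : ℕ) : ℤ) - 2, 1, 0, (0 : ℕ)) = 0 := by simp [Bz]
    rw [hMinor, scaledXi_zero, scaledZeta_zero, one_mul, mul_one, zero_mul, mul_zero, smul_zero,
      smul_zero]
    constructor <;> exact ((sub_zero _).trans (one_smul F us0)).symm
  | succ m =>
    have hMinor : Bz B (((m + 1 + 1 : ℕ) : ℤ) - 2, 1, 0, (m + 1 : ℕ))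
        = scaledZetaMinor qq uGen m := by
      rw [show ((m + 1 + 1 : ℕ) : ℤ) - 2 = m by push_cast; ring, ← hB.eq_scaledZetaMinor hPBW hσ m]
      exact Bz_natCast B m 1 0 (m + 1)
    rw [hMinor, show 2 * ((m + 1 + 1 : ℕ) : ℤ) - 1 = (2 * m + 3 : ℕ) by push_cast; ring,
      show 3 * ((m + 1 + 1 : ℕ) : ℤ) - 3 = (3 * m + 3 : ℕ) by push_cast; ring,
      show 2 * ((m + 1 + 1 : ℕ) : ℤ) - 3 = (2 * m + 1 : ℕ) by push_cast; ring]
    simp only [zpow_natCast]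
    exact ⟨scaledXi_succ m, straighteningRelations_uGen.minorRelations.scaledXi_succ' m⟩
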